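/- arXiv:1207.6854 — 6 statements merged into one kernel-verified Lean document; each statement's English description precedes it below -/
import Mathlib

section
/- Let {f_i}_{i∈I} be a frame for a separable Hilbert space H with frame operator S and frame bounds A ≤ B, and let L : H → H be a bounded operator. Then {L f_i}_{i∈I} is a frame for H if and only if L is surjective. Moreover, in this case the frame operator for {L f_i}_{i∈I} is L S L*, and B‖L‖² is an upper frame bound for {L f_i}_{i∈I}. -/
/-!
Everything reduces to the identity `⟪L fᵢ, g⟫ = ⟪fᵢ, L* g⟫`: the frame sum of `{L fᵢ}` at `g` is the
frame sum of `{fᵢ}` at `L* g`, hence lies between `A ‖L* g‖²` and `B ‖L* g‖²`. Since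
`‖L* g‖ ≤ ‖L‖ ‖g‖`, the bound `B ‖L‖²` always holds from above, and a positive lower frame bound for
`{L fᵢ}` exists exactly when `L*` is bounded below. By the closed range theorem this is equivalent
to surjectivity of `L`: if `L` is onto, the open mapping theorem gives preimages of controlled norm
(`exists_norm_le_mul_norm_adjoint`); if `L*` is bounded below, then `L L*` is coercive, hence
invertible (`surjective_of_le_norm_adjoint`). The formula for the frame operator follows by applying
`L` to the expansion of `S (L* g)`.
-/

noncomputable section

open ContinuousLinearMap

local notation "⟪" x ", " y "⟫" => @inner ℂ _ _ x y

/-- A family `f : I → H` is a frame for the complex Hilbert space `H` if there are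
constants `0 < A ≤ B` with `A‖g‖² ≤ ∑ᵢ |⟨g, fᵢ⟩|² ≤ B‖g‖²` for every `g ∈ H`. -/
def IsFrame {I H : Type*} [NormedAddCommGroup H] [InnerProductSpace ℂ H] (f : I → H) : Prop :=
  ∃ A B : ℝ, 0 < A ∧ A ≤ B ∧ ∀ g : H,
    Summable (fun i => ‖⟪f i, g⟫‖ ^ 2) ∧
    A * ‖g‖ ^ 2 ≤ ∑' i, ‖⟪f i, g⟫‖ ^ 2 ∧
    ∑' i, ‖⟪f i, g⟫‖ ^ 2 ≤ B * ‖g‖ ^ 2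

/-- `S` is the frame operator of the family `f`, i.e. `S g = ∑ᵢ ⟨g, fᵢ⟩ fᵢ`. -/
def IsFrameOperator {I H : Type*} [NormedAddCommGroup H] [InnerProductSpace ℂ H]
    (f : I → H) (S : H →L[ℂ] H) : Prop :=
  ∀ g : H, HasSum (fun i => ⟪f i, g⟫ • f i) (S g)

/-- The adjoint of a surjective operator is bounded below. -/
theorem exists_norm_le_mul_norm_adjoint {H : Type*} [NormedAddCommGroup H] [InnerProductSpace ℂ H]
    [CompleteSpace H] (L : H →L[ℂ] H) (hL : Function.Surjective L) :
    ∃ C > 0, ∀ g : H, ‖g‖ ≤ C * ‖adjoint L g‖ := by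
  obtain ⟨C, hC, h⟩ := L.exists_preimage_norm_le hL
  refine ⟨C, hC, fun g => ?_⟩
  obtain ⟨x, hx, hxn⟩ := h g
  rcases (norm_nonneg g).eq_or_lt with h0 | h0
  · rw [← h0]
    positivity
  -- With `L x = g` one has `‖g‖² = ⟪x, L* g⟫ ≤ C ‖g‖ ‖L* g‖`.
  have h1 : ‖g‖ * ‖g‖ ≤ ‖x‖ * ‖adjoint L g‖ := by
    calc ‖g‖ * ‖g‖ = ‖⟪g, g⟫‖ := by
          rw [inner_self_eq_norm_sq_to_K]; simp [sq]
      _ = ‖⟪x, adjoint L g⟫‖ := by rw [adjoint_inner_right, hx]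
      _ ≤ _ := norm_inner_le_norm _ _
  have h2 : ‖x‖ * ‖adjoint L g‖ ≤ C * ‖g‖ * ‖adjoint L g‖ := by gcongr
  refine le_of_mul_le_mul_left ?_ h0
  linarith

/-- An operator whose adjoint is bounded below is surjective. -/
theorem surjective_of_le_norm_adjoint {H : Type*} [NormedAddCommGroup H] [InnerProductSpace ℂ H]
    [CompleteSpace H] (L : H →L[ℂ] H) (c : ℝ) (hc : 0 < c)
    (h : ∀ g : H, c * ‖g‖ ^ 2 ≤ ‖adjoint L g‖ ^ 2) : Function.Surjective L := by
  have hu : IsUnit (L ∘L adjoint L) := by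
    refine isUnit_of_forall_le_norm_inner_map _ (c := ⟨c, hc.le⟩) hc fun g => ?_
    have h1 : ‖⟪(L ∘L adjoint L) g, g⟫‖ = ‖adjoint L g‖ ^ 2 := by
      rw [comp_apply, ← adjoint_inner_right, inner_self_eq_norm_sq_to_K]
      simp
    rw [h1, mul_comm]
    exact h g
  intro y
  obtain ⟨x, hx⟩ := (isUnit_iff_bijective.mp hu).2 y
  exact ⟨_, hx⟩

/-- If `{fᵢ}` is a frame with frame operator `S` and frame bounds `A ≤ B`, and `L` is a
bounded operator, then `{L fᵢ}` is a frame iff `L` is surjective; in that case its frame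
operator is `L S L*` and `B‖L‖²` is an upper frame bound. -/
theorem stmt2 {I H : Type*} [NormedAddCommGroup H] [InnerProductSpace ℂ H] [CompleteSpace H]
    (f : I → H) (A B : ℝ) (hA : 0 < A) (hAB : A ≤ B)
    (hframe : ∀ g : H, Summable (fun i => ‖⟪f i, g⟫‖ ^ 2) ∧
      A * ‖g‖ ^ 2 ≤ ∑' i, ‖⟪f i, g⟫‖ ^ 2 ∧ ∑' i, ‖⟪f i, g⟫‖ ^ 2 ≤ B * ‖g‖ ^ 2)
    (S : H →L[ℂ] H) (hS : IsFrameOperator f S) (L : H →L[ℂ] H) :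
    (IsFrame (fun i => L (f i)) ↔ Function.Surjective L) ∧
    (Function.Surjective L →
      IsFrameOperator (fun i => L (f i)) (L ∘L S ∘L ContinuousLinearMap.adjoint L) ∧
      ∀ g : H, ∑' i, ‖⟪L (f i), g⟫‖ ^ 2 ≤ B * ‖L‖ ^ 2 * ‖g‖ ^ 2) := by
  have hB : 0 < B := hA.trans_le hAB
  have hin : ∀ (g : H) (i : I), ⟪L (f i), g⟫ = ⟪f i, adjoint L g⟫ := fun g i =>
    (adjoint_inner_right L (f i) g).symm
  have hup : ∀ g : H, ∑' i, ‖⟪L (f i), g⟫‖ ^ 2 ≤ B * ‖L‖ ^ 2 * ‖g‖ ^ 2 := fun g => by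
    simp only [hin]
    have h1 : ‖adjoint L g‖ ≤ ‖L‖ * ‖g‖ := by
      simpa using (adjoint L).le_opNorm g
    calc _ ≤ B * ‖adjoint L g‖ ^ 2 := (hframe _).2.2
      _ ≤ B * (‖L‖ * ‖g‖) ^ 2 := by gcongr
      _ = _ := by ring
  refine ⟨⟨?_, fun hL => ?_⟩, fun hL => ⟨fun g => ?_, hup⟩⟩
  · rintro ⟨A', B', hA', -, h⟩
    refine surjective_of_le_norm_adjoint L (A' / B) (by positivity) fun g => ?_
    have h1 := (h g).2.1
    simp only [hin] at h1
    have h2 := h1.trans (hframe _).2.2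
    rw [div_mul_eq_mul_div, div_le_iff₀ hB]
    linarith
  · obtain ⟨C, hC, h⟩ := exists_norm_le_mul_norm_adjoint L hL
    -- The `max` keeps the two bounds ordered even on the zero space.
    refine ⟨A / C ^ 2, max (A / C ^ 2) (B * ‖L‖ ^ 2), by positivity, le_max_left _ _,
      fun g => ⟨?_, ?_, ?_⟩⟩
    · simpa only [hin] using (hframe (adjoint L g)).1
    · simp only [hin]
      refine le_trans ?_ (hframe (adjoint L g)).2.1
      rw [div_mul_eq_mul_div, div_le_iff₀ (by positivity)]
      calc A * ‖g‖ ^ 2 ≤ A * (C * ‖adjoint L g‖) ^ 2 := by gcongr; exact h g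
        _ = _ := by ring
    · exact (hup g).trans (by gcongr; exact le_max_right _ _)
  · simpa only [hin, map_smul, comp_apply] using L.hasSum (hS (adjoint L g))
end
end

section
/- Let {f_i}_{i∈I} be a frame for a separable Hilbert space H with frame operator S, and let L : H → H be a bounded operator. Then {L f_i}_{i∈I} and {L* f_i}_{i∈I} are both frames for H if and only if L is invertible (bijective with bounded inverse). Moreover, in this case the frame operators for {L f_i}_{i∈I} and {L* f_i}_{i∈I} are L S L* and L* S L, respectively. -/
/-!
Moving an operator across the inner product, `⟪T fᵢ, g⟫ = ⟪fᵢ, T* g⟫`, so the frame sum of `{T fᵢ}`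
at `g` is the frame sum of `{fᵢ}` at `T* g`, which is comparable to `‖T* g‖²`. Hence `{T fᵢ}` is a
frame iff `T*` is bounded below (`isFrame_map_iff`). Applied to `T = L` and `T = L*`, both families
are frames iff `L*` and `L` are bounded below. In that case `L` is injective with closed range, and
its range is dense because `(range L)ᗮ = ker L* = 0`, so `L` is bijective; conversely an invertible
operator and its adjoint are bounded below (`isUnit_iff_antilipschitz_adjoint`).
The frame operator formula is the image of the series for `S (T* g)` under `T`.
-/

noncomputable section

open ContinuousLinearMap

local notation "⟪" x ", " y "⟫" => @inner ℂ _ _ x y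

/-- The image of a frame under `T` is a frame exactly when `T*` is bounded below. -/
lemma isFrame_map_iff {I H : Type*} [NormedAddCommGroup H] [InnerProductSpace ℂ H]
    [CompleteSpace H] {f : I → H} (hf : IsFrame f) (T : H →L[ℂ] H) :
    IsFrame (fun i => T (f i)) ↔ ∃ K, AntilipschitzWith K (adjoint T) := by
  obtain ⟨A, B, hA, hAB, hf⟩ := hf
  have hB : 0 < B := hA.trans_le hAB
  unfold IsFrame
  simp only [← adjoint_inner_right]
  constructor
  · rintro ⟨A', B', hA', -, h⟩
    refine ⟨Real.toNNReal √(B / A'), antilipschitz_of_bound _ fun g => ?_⟩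
    rw [Real.coe_toNNReal _ (Real.sqrt_nonneg _)]
    have h1 : A' * ‖g‖ ^ 2 ≤ B * ‖adjoint T g‖ ^ 2 := (h g).2.1.trans (hf _).2.2
    refine le_of_sq_le_sq ?_ (by positivity)
    rw [mul_pow, Real.sq_sqrt (by positivity), div_mul_eq_mul_div, le_div_iff₀ hA']
    linarith
  · rintro ⟨K, hK⟩
    -- Adding `1` keeps the denominator of the lower bound positive when `K = 0`,
    -- and the maximum ensures lower bound ≤ upper bound even when `H` is trivial.
    refine ⟨A / (K ^ 2 + 1), max (A / (K ^ 2 + 1)) (B * ‖adjoint T‖ ^ 2), by positivity,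
      le_max_left _ _, fun g => ⟨(hf _).1, le_trans ?_ (hf _).2.1, (hf _).2.2.trans ?_⟩⟩
    · have h1 : ‖g‖ ≤ K * ‖adjoint T g‖ := bound_of_antilipschitz _ hK g
      have h2 : ‖g‖ ^ 2 ≤ (K * ‖adjoint T g‖) ^ 2 := by gcongr
      rw [div_mul_eq_mul_div, div_le_iff₀ (by positivity), mul_assoc]
      gcongr
      nlinarith [sq_nonneg ‖adjoint T g‖]
    · have h1 : ‖adjoint T g‖ ≤ ‖adjoint T‖ * ‖g‖ := le_opNorm _ _
      calc B * ‖adjoint T g‖ ^ 2 ≤ B * (‖adjoint T‖ * ‖g‖) ^ 2 := by gcongr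
        _ = B * ‖adjoint T‖ ^ 2 * ‖g‖ ^ 2 := by ring
        _ ≤ _ := by gcongr; exact le_max_right _ _

/-- An operator on a Hilbert space is invertible iff it and its adjoint are bounded below. -/
lemma isUnit_iff_antilipschitz_adjoint {H : Type*} [NormedAddCommGroup H]
    [InnerProductSpace ℂ H] [CompleteSpace H] (L : H →L[ℂ] H) :
    IsUnit L ↔ (∃ K, AntilipschitzWith K (adjoint L)) ∧ ∃ K, AntilipschitzWith K L := by
  have key (T : H →L[ℂ] H) (hT : IsUnit T) : ∃ K, AntilipschitzWith K T := by
    rw [isUnit_iff_bijective, bijective_iff_dense_range_and_antilipschitz] at hT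
    exact hT.2
  refine ⟨fun h => ⟨key _ (star_eq_adjoint L ▸ h.star), key L h⟩, ?_⟩
  rintro ⟨⟨K, hK⟩, hL⟩
  rw [isUnit_iff_bijective, bijective_iff_dense_range_and_antilipschitz]
  refine ⟨?_, hL⟩
  rw [Submodule.topologicalClosure_eq_top_iff, orthogonal_range]
  exact LinearMap.ker_eq_bot.2 hK.injective

lemma IsFrameOperator.map {I H : Type*} [NormedAddCommGroup H] [InnerProductSpace ℂ H]
    [CompleteSpace H] {f : I → H} {S : H →L[ℂ] H} (hS : IsFrameOperator f S) (T : H →L[ℂ] H) :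
    IsFrameOperator (fun i => T (f i)) (T ∘L S ∘L adjoint T) := by
  intro g
  simpa [adjoint_inner_right] using (hS (adjoint T g)).mapL T

/-- If `{fᵢ}` is a frame with frame operator `S` and `L` is bounded, then `{L fᵢ}` and
`{L* fᵢ}` are both frames iff `L` is invertible (bijective with bounded inverse);
in that case their frame operators are `L S L*` and `L* S L` respectively. -/
theorem stmt3 {I H : Type*} [NormedAddCommGroup H] [InnerProductSpace ℂ H] [CompleteSpace H]
    (f : I → H) (A B : ℝ) (hA : 0 < A) (hAB : A ≤ B)
    (hframe : ∀ g : H, Summable (fun i => ‖⟪f i, g⟫‖ ^ 2) ∧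
      A * ‖g‖ ^ 2 ≤ ∑' i, ‖⟪f i, g⟫‖ ^ 2 ∧ ∑' i, ‖⟪f i, g⟫‖ ^ 2 ≤ B * ‖g‖ ^ 2)
    (S : H →L[ℂ] H) (hS : IsFrameOperator f S) (L : H →L[ℂ] H) :
    ((IsFrame (fun i => L (f i)) ∧ IsFrame (fun i => ContinuousLinearMap.adjoint L (f i))) ↔
      ∃ M : H ≃L[ℂ] H, (M : H →L[ℂ] H) = L) ∧
    ((∃ M : H ≃L[ℂ] H, (M : H →L[ℂ] H) = L) →
      IsFrameOperator (fun i => L (f i)) (L ∘L S ∘L ContinuousLinearMap.adjoint L) ∧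
      IsFrameOperator (fun i => ContinuousLinearMap.adjoint L (f i))
        (ContinuousLinearMap.adjoint L ∘L S ∘L L)) := by
  have hf : IsFrame f := ⟨A, B, hA, hAB, hframe⟩
  have hM : IsUnit L ↔ ∃ M : H ≃L[ℂ] H, (M : H →L[ℂ] H) = L :=
    ⟨fun ⟨u, hu⟩ => ⟨ContinuousLinearEquiv.unitsEquiv ℂ H u, hu⟩,
      fun ⟨M, hM⟩ => ⟨(ContinuousLinearEquiv.unitsEquiv ℂ H).symm M, hM⟩⟩
  refine ⟨?_, fun _ => ⟨hS.map L, ?_⟩⟩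
  · rw [isFrame_map_iff hf L, isFrame_map_iff hf (adjoint L), adjoint_adjoint, ← hM,
      isUnit_iff_antilipschitz_adjoint]
  · simpa only [adjoint_adjoint] using hS.map (adjoint L)
end
end

section
/- Let {f_i}_{i∈I} be a frame for a separable Hilbert space H with frame operator S and frame bounds A ≤ B, and let L : H → H be a bounded operator. Then {f_i + L f_i}_{i∈I} is a frame for H if and only if I + L is surjective. Moreover, in this case the frame operator for {f_i + L f_i}_{i∈I} is (I + L) S (I + L*), and B‖I + L‖² is an upper frame bound. -/
/-!
Write `M = I + L`, so that the new family is `M fᵢ`. Since `⟪M fᵢ, g⟫ = ⟪fᵢ, M* g⟫`, the frame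
inequalities of `f` at `M* g` squeeze `∑ᵢ |⟪M fᵢ, g⟫|²` between `A‖M* g‖²` and `B‖M* g‖²`.
As `‖M*‖ = ‖M‖`, this gives the upper bound, and it shows that `M fᵢ` is a frame iff `M*` is
bounded below, which is equivalent to surjectivity of `M` (`adjoint_bounded_below`,
`surjective_of_adjoint_bounded_below`). The frame operator is obtained by applying `M` termwise
to the series for `S (M* g)`.
-/

noncomputable section

open ContinuousLinearMap

local notation "⟪" x ", " y "⟫" => @inner ℂ _ _ x y

/-- A surjective bounded operator has an adjoint that is bounded below: the open mapping theorem
gives preimages `M x = g` with `‖x‖ ≤ C‖g‖`, and then `‖g‖² = ⟪x, M* g⟫ ≤ C‖g‖‖M* g‖`. -/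
theorem adjoint_bounded_below {H : Type*} [NormedAddCommGroup H] [InnerProductSpace ℂ H]
    [CompleteSpace H] (M : H →L[ℂ] H) (hM : Function.Surjective M) :
    ∃ C : ℝ, 0 < C ∧ ∀ g : H, ‖g‖ ≤ C * ‖adjoint M g‖ := by
  obtain ⟨C, hC, h⟩ := M.exists_preimage_norm_le hM
  refine ⟨C, hC, fun g => ?_⟩
  obtain ⟨x, hx, hxC⟩ := h g
  rcases (norm_nonneg g).eq_or_lt with h0 | h0
  · rw [← h0]; positivity
  have h1 : ‖g‖ * ‖g‖ ≤ ‖x‖ * ‖adjoint M g‖ :=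
    calc ‖g‖ * ‖g‖ = ‖⟪g, g⟫‖ := by rw [inner_self_eq_norm_sq_to_K]; simp [sq]
      _ = ‖⟪x, adjoint M g⟫‖ := by rw [adjoint_inner_right, hx]
      _ ≤ ‖x‖ * ‖adjoint M g‖ := norm_inner_le_norm _ _
  have h2 : ‖x‖ * ‖adjoint M g‖ ≤ C * ‖g‖ * ‖adjoint M g‖ := by gcongr
  refine le_of_mul_le_mul_left ?_ h0
  linarith

/-- If `M*` is bounded below then `M M*` is coercive, hence invertible, so `M` is surjective. -/
theorem surjective_of_adjoint_bounded_below {H : Type*} [NormedAddCommGroup H]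
    [InnerProductSpace ℂ H] [CompleteSpace H] (M : H →L[ℂ] H) (c : ℝ) (hc : 0 < c)
    (h : ∀ g : H, c * ‖g‖ ^ 2 ≤ ‖adjoint M g‖ ^ 2) : Function.Surjective M := by
  have hu : IsUnit (M ∘L adjoint M) := by
    refine isUnit_of_forall_le_norm_inner_map (c := ⟨c, hc.le⟩) _ hc fun g => ?_
    have e : ‖⟪(M ∘L adjoint M) g, g⟫‖ = ‖adjoint M g‖ ^ 2 := by
      rw [comp_apply, ← adjoint_inner_right, inner_self_eq_norm_sq_to_K]; simp
    rw [e]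
    exact (mul_comm _ _).trans_le (h g)
  intro y
  obtain ⟨N, hN⟩ := hu.exists_right_inv
  exact ⟨adjoint M (N y), by simpa using congrArg (fun T : H →L[ℂ] H => T y) hN⟩

/-- If `{fᵢ}` is a frame with frame operator `S` and frame bounds `A ≤ B`, and `L` is bounded,
then `{fᵢ + L fᵢ}` is a frame iff `I + L` is surjective; in that case its frame operator is
`(I + L) S (I + L*)` and `B‖I + L‖²` is an upper frame bound. -/
theorem stmt4 {I H : Type*} [NormedAddCommGroup H] [InnerProductSpace ℂ H] [CompleteSpace H]
    (f : I → H) (A B : ℝ) (hA : 0 < A) (hAB : A ≤ B)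
    (hframe : ∀ g : H, Summable (fun i => ‖⟪f i, g⟫‖ ^ 2) ∧
      A * ‖g‖ ^ 2 ≤ ∑' i, ‖⟪f i, g⟫‖ ^ 2 ∧ ∑' i, ‖⟪f i, g⟫‖ ^ 2 ≤ B * ‖g‖ ^ 2)
    (S : H →L[ℂ] H) (hS : IsFrameOperator f S) (L : H →L[ℂ] H) :
    (IsFrame (fun i => f i + L (f i)) ↔ Function.Surjective ⇑(1 + L)) ∧
    (Function.Surjective ⇑(1 + L) →
      IsFrameOperator (fun i => f i + L (f i))
        ((1 + L) ∘L S ∘L (1 + ContinuousLinearMap.adjoint L)) ∧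
      ∀ g : H, ∑' i, ‖⟪f i + L (f i), g⟫‖ ^ 2 ≤ B * ‖1 + L‖ ^ 2 * ‖g‖ ^ 2) := by
  have hB : 0 < B := hA.trans_le hAB
  set M : H →L[ℂ] H := 1 + L with hMdef
  have hMf : ∀ i, f i + L (f i) = M (f i) := fun i => by simp [hMdef]
  have hadj : 1 + adjoint L = adjoint M := by
    rw [hMdef, map_add, ← star_eq_adjoint (1 : H →L[ℂ] H), star_one]
  have hin : ∀ i g, ⟪M (f i), g⟫ = ⟪f i, adjoint M g⟫ := fun i g =>
    (adjoint_inner_right M (f i) g).symm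
  have hup : ∀ g : H, ‖adjoint M g‖ ^ 2 ≤ ‖M‖ ^ 2 * ‖g‖ ^ 2 := fun g => by
    rw [← mul_pow, ← LinearIsometryEquiv.norm_map adjoint M]
    gcongr
    exact le_opNorm _ _
  have hbound : ∀ g : H, ∑' i, ‖⟪f i, adjoint M g⟫‖ ^ 2 ≤ B * ‖M‖ ^ 2 * ‖g‖ ^ 2 := fun g => by
    refine (hframe (adjoint M g)).2.2.trans ?_
    rw [mul_assoc]
    exact mul_le_mul_of_nonneg_left (hup g) hB.le
  simp only [hMf, hadj, IsFrame, IsFrameOperator, hin]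
  refine ⟨⟨?_, fun hM => ?_⟩, fun _ => ⟨fun g => ?_, hbound⟩⟩
  · rintro ⟨A', B', hA', -, h⟩
    refine surjective_of_adjoint_bounded_below M (A' / B) (by positivity) fun g => ?_
    rw [div_mul_eq_mul_div, div_le_iff₀ hB, mul_comm _ B]
    exact (h g).2.1.trans (hframe (adjoint M g)).2.2
  · obtain ⟨C, hC, h⟩ := adjoint_bounded_below M hM
    -- The maximum secures `A' ≤ B'` also when `H` is trivial, where `‖M‖ = 0`.
    refine ⟨A / C ^ 2, max (A / C ^ 2) (B * ‖M‖ ^ 2), by positivity, le_max_left _ _,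
      fun g => ⟨(hframe _).1, le_trans ?_ (hframe _).2.1, (hbound g).trans ?_⟩⟩
    · rw [div_mul_eq_mul_div, div_le_iff₀ (by positivity), mul_assoc]
      refine mul_le_mul_of_nonneg_left ?_ hA.le
      rw [← mul_pow, mul_comm _ C]
      exact pow_le_pow_left₀ (norm_nonneg g) (h g) 2
    · gcongr
      exact le_max_right _ _
  · simpa using (hS (adjoint M g)).mapL M
end
end

section
/- Let {f_i}_{i∈I} be a sequence in a separable Hilbert space H such that the series ∑_{i∈I} ⟨f, f_i⟩ f_i converges for every f ∈ H. If L : H → H is a bounded operator such that both {L f_i}_{i∈I} and {L* f_i}_{i∈I} are frames for H, then {f_i}_{i∈I} is itself a frame for H. -/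
/-!
Convergence of `∑ ⟨g, fᵢ⟩ fᵢ` for every `g` defines a symmetric operator on all of `H`, which is
bounded by the Hellinger–Toeplitz theorem; hence `f` has a Bessel bound (`exists_bessel_bound`).

Since `⟨L fᵢ, g⟩ = ⟨fᵢ, L* g⟩`, the lower frame bound of `L f` combined with the Bessel bound of `f`
shows that `L*` is bounded below, so its range is closed. The lower frame bound of `L* f` makes `L`
injective, so the range of `L*` is dense. Thus `L*` is surjective (`adjoint_surjective`), and writing
`h = L* g` transfers the lower frame bound of `L f` to `f`.
-/

noncomputable section

local notation "⟪" x ", " y "⟫" => @inner ℂ _ _ x y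

section

variable {I H : Type*} [NormedAddCommGroup H] [InnerProductSpace ℂ H]

/-- The operator `g ↦ ∑ ⟨g, fᵢ⟩ fᵢ`, as a linear map defined on all of `H`; its continuity is not
part of the definition. -/
def frameOperator (f : I → H) (hconv : ∀ g : H, Summable (fun i => ⟪f i, g⟫ • f i)) :
    H →ₗ[ℂ] H where
  toFun g := ∑' i, ⟪f i, g⟫ • f i
  map_add' x y := by
    rw [← (hconv x).tsum_add (hconv y)]
    simp only [inner_add_right, add_smul]
  map_smul' c x := by
    rw [RingHom.id_apply, ← (hconv x).tsum_const_smul c]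
    simp only [inner_smul_right, mul_smul]

lemma hasSum_frameOperator (f : I → H) (hconv : ∀ g : H, Summable (fun i => ⟪f i, g⟫ • f i))
    (g : H) : HasSum (fun i => ⟪f i, g⟫ • f i) (frameOperator f hconv g) :=
  (hconv g).hasSum

lemma hasSum_inner_frameOperator (f : I → H)
    (hconv : ∀ g : H, Summable (fun i => ⟪f i, g⟫ • f i)) (x y : H) :
    HasSum (fun i => ⟪f i, y⟫ * ⟪x, f i⟫) ⟪x, frameOperator f hconv y⟫ := by
  simpa [inner_smul_right] using (innerSL ℂ x).hasSum (hasSum_frameOperator f hconv y)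

lemma frameOperator_isSymmetric (f : I → H)
    (hconv : ∀ g : H, Summable (fun i => ⟪f i, g⟫ • f i)) :
    (frameOperator f hconv).IsSymmetric := by
  intro x y
  have h := (hasSum_inner_frameOperator f hconv y x).star
  simp only [star_mul', RCLike.star_def, inner_conj_symm] at h
  refine h.unique ?_
  simpa only [mul_comm] using hasSum_inner_frameOperator f hconv x y

/-- Pointwise convergence of the frame series forces a Bessel bound: the frame operator is
everywhere defined and symmetric, hence bounded. -/
lemma exists_bessel_bound [CompleteSpace H] (f : I → H)
    (hconv : ∀ g : H, Summable (fun i => ⟪f i, g⟫ • f i)) :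
    ∃ C : ℝ, ∀ g : H, Summable (fun i => ‖⟪f i, g⟫‖ ^ 2) ∧
      ∑' i, ‖⟪f i, g⟫‖ ^ 2 ≤ C * ‖g‖ ^ 2 := by
  let S : H →L[ℂ] H := ⟨frameOperator f hconv, (frameOperator_isSymmetric f hconv).continuous⟩
  refine ⟨‖S‖, fun g => ?_⟩
  have h : HasSum (fun i => ‖⟪f i, g⟫‖ ^ 2) (RCLike.re ⟪g, S g⟫) := by
    have h := RCLike.hasSum_re ℂ (hasSum_inner_frameOperator f hconv g g)
    have hterm (i : I) : RCLike.re (⟪f i, g⟫ * ⟪g, f i⟫) = ‖⟪f i, g⟫‖ ^ 2 := by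
      rw [← inner_conj_symm g (f i), RCLike.mul_conj]
      norm_cast
    simp only [hterm] at h
    exact h
  refine ⟨h.summable, ?_⟩
  rw [h.tsum_eq]
  calc RCLike.re ⟪g, S g⟫ ≤ ‖g‖ * ‖S g‖ := re_inner_le_norm g (S g)
    _ ≤ ‖g‖ * (‖S‖ * ‖g‖) := by gcongr; exact S.le_opNorm g
    _ = ‖S‖ * ‖g‖ ^ 2 := by ring

/-- An adjoint that is bounded below has closed range, and that range is dense when the operator
is injective. -/
lemma adjoint_surjective [CompleteSpace H] (L : H →L[ℂ] H) (hinj : ∀ g, L g = 0 → g = 0)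
    {A C : ℝ} (hA : 0 < A)
    (hbelow : ∀ g, A * ‖g‖ ^ 2 ≤ C * ‖ContinuousLinearMap.adjoint L g‖ ^ 2) :
    Function.Surjective (ContinuousLinearMap.adjoint L) := by
  have hanti : AntilipschitzWith (Real.toNNReal √(C / A)) (ContinuousLinearMap.adjoint L) := by
    refine ContinuousLinearMap.antilipschitz_of_bound _ fun g => ?_
    rw [Real.coe_toNNReal _ (Real.sqrt_nonneg _), ← Real.sqrt_sq (norm_nonneg (_ : H)),
      ← Real.sqrt_sq (norm_nonneg (ContinuousLinearMap.adjoint L g)),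
      ← Real.sqrt_mul' _ (sq_nonneg _)]
    refine Real.sqrt_le_sqrt ?_
    rw [div_mul_eq_mul_div, le_div_iff₀ hA, mul_comm]
    exact hbelow g
  have hclosed := hanti.isClosed_range (ContinuousLinearMap.adjoint L).uniformContinuous
  have hker : L.ker = ⊥ := LinearMap.ker_eq_bot'.2 hinj
  have htop := ContinuousLinearMap.orthogonal_ker L
  rw [hker, Submodule.bot_orthogonal_eq_top,
    IsClosed.submodule_topologicalClosure_eq (by rw [LinearMap.coe_range]; exact hclosed)] at htop
  exact LinearMap.range_eq_top.1 htop.symm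

end

/-- If `{fᵢ}` is a family in `H` for which the series `∑ᵢ ⟨g, fᵢ⟩ fᵢ` converges for every
`g ∈ H`, and `L` is a bounded operator such that both `{L fᵢ}` and `{L* fᵢ}` are frames,
then `{fᵢ}` is a frame for `H`. -/
theorem stmt8 {I H : Type*} [NormedAddCommGroup H] [InnerProductSpace ℂ H] [CompleteSpace H]
    (f : I → H) (hconv : ∀ g : H, Summable (fun i => ⟪f i, g⟫ • f i))
    (L : H →L[ℂ] H)
    (hLf : IsFrame (fun i => L (f i)))
    (hLadj : IsFrame (fun i => ContinuousLinearMap.adjoint L (f i))) :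
    IsFrame f := by
  obtain ⟨C, hbessel⟩ := exists_bessel_bound f hconv
  obtain ⟨A, _, hA, -, hframe⟩ := hLf
  obtain ⟨A', _, hA', -, hframe'⟩ := hLadj
  simp only [ContinuousLinearMap.adjoint_inner_left] at hframe'
  simp only [← ContinuousLinearMap.adjoint_inner_right] at hframe
  have hinj : ∀ g, L g = 0 → g = 0 := by
    intro g hg
    have h := (hframe' g).2.1
    simp only [hg, inner_zero_right, norm_zero, ne_eq, OfNat.ofNat_ne_zero, not_false_eq_true,
      zero_pow, tsum_zero] at h
    by_contra hne
    have : 0 < ‖g‖ := norm_pos_iff.2 hne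
    have : 0 < A' * ‖g‖ ^ 2 := by positivity
    linarith
  have hsurj := adjoint_surjective L hinj hA fun g => (hframe g).2.1.trans (hbessel _).2
  -- The summand `1` keeps the denominator positive even when `L = 0`, which occurs for `H = 0`.
  set M := ‖ContinuousLinearMap.adjoint L‖ ^ 2 + 1 with hM
  have hMpos : 0 < M := by positivity
  refine ⟨A / M, max (A / M) C, by positivity, le_max_left _ _, fun h => ⟨(hbessel h).1, ?_, ?_⟩⟩
  · obtain ⟨g, rfl⟩ := hsurj h
    refine le_trans ?_ (hframe g).2.1
    have hle : ‖ContinuousLinearMap.adjoint L g‖ ^ 2 ≤ M * ‖g‖ ^ 2 := by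
      have := pow_le_pow_left₀ (norm_nonneg _) ((ContinuousLinearMap.adjoint L).le_opNorm g) 2
      rw [mul_pow] at this
      nlinarith [sq_nonneg ‖g‖]
    rw [div_mul_eq_mul_div, div_le_iff₀ hMpos]
    nlinarith
  · exact (hbessel h).2.trans (by gcongr; exact le_max_right _ _)
end
end

section
/- Let {f_i}_{i∈I} be a Riesz basis for a separable Hilbert space H with frame operator S, and let {g_i}_{i∈I} be an alternative dual frame of {f_i}_{i∈I}. Let a, b be real numbers and suppose that −1 is not in the spectrum of S^{−a+b−1} (the real power being defined via the continuous functional calculus for the positive invertible operator S). Then {S^a f_i + S^b g_i}_{i∈I} is a Riesz basis for H. -/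
/-!
Write `fᵢ = U eᵢ` with `U` bounded invertible and `e` an orthonormal basis. Then `S = U U*` is
strictly positive, so its real powers are invertible and multiply by adding exponents
(`frameOperator_eq`, `frameOperator_isStrictlyPositive`). Applying `U⁻¹` to the duality relation
shows `⟨gᵢ, x⟩ = ⟨eᵢ, U⁻¹ x⟩`, so `g` is biorthogonal to `f`, and the series for `S gⱼ` collapses
to its `j`-th term: `S gⱼ = fⱼ` (`frameOperator_apply_dual`). A Riesz basis therefore has only its
canonical dual `gⱼ = S⁻¹ fⱼ`, and
`S^a fᵢ + S^b gᵢ = S^a (1 + S^(-a+b-1)) fᵢ`.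
The middle factor is invertible because `-1` is not in the spectrum of `S^(-a+b-1)`, and the image
of a Riesz basis under an invertible operator is a Riesz basis (`isRieszBasis_of_isUnit`).
-/

noncomputable section

open ContinuousLinearMap

local notation "⟪" x ", " y "⟫" => @inner ℂ _ _ x y

/-- A family `f : I → H` is a Riesz basis for the complex Hilbert space `H` if it is the
image of an orthonormal basis under a bounded invertible operator. -/
def IsRieszBasis {I H : Type*} [NormedAddCommGroup H] [InnerProductSpace ℂ H]
    [CompleteSpace H] (f : I → H) : Prop :=
  ∃ (U : H ≃L[ℂ] H) (e : HilbertBasis I ℂ H), ∀ i, f i = U (e i)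

section

variable {I H : Type*} [NormedAddCommGroup H] [InnerProductSpace ℂ H] [CompleteSpace H]

theorem frameOperator_eq {f : I → H} {S : H →L[ℂ] H} (hS : IsFrameOperator f S)
    (U : H ≃L[ℂ] H) (e : HilbertBasis I ℂ H) (hU : ∀ i, f i = U (e i)) :
    S = (U : H →L[ℂ] H) * star (U : H →L[ℂ] H) := by
  ext x
  have h := (e.hasSum_repr (adjoint (U : H →L[ℂ] H) x)).mapL (U : H →L[ℂ] H)
  refine (hS x).unique ?_
  simpa [HilbertBasis.repr_apply_apply, adjoint_inner_right, hU, star_eq_adjoint] using h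

theorem frameOperator_isStrictlyPositive {f : I → H} {S : H →L[ℂ] H}
    (hS : IsFrameOperator f S) (hf : IsRieszBasis f) : IsStrictlyPositive S := by
  obtain ⟨U, e, hU⟩ := hf
  rw [frameOperator_eq hS U e hU]
  have hu : IsUnit (U : H →L[ℂ] H) := isUnit_iff_bijective.mpr U.bijective
  exact (hu.mul hu.star).isStrictlyPositive (mul_star_self_nonneg _)

/-- The only alternative dual of a Riesz basis is the canonical one. -/
theorem frameOperator_apply_dual {f g : I → H} {S : H →L[ℂ] H}
    (hS : IsFrameOperator f S) (hf : IsRieszBasis f)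
    (hdual : ∀ x : H, HasSum (fun i => ⟪g i, x⟫ • f i) x) (j : I) : S (g j) = f j := by
  obtain ⟨U, e, hU⟩ := hf
  have key (x : H) : ⟪g j, x⟫ = ⟪e j, U.symm x⟫ := by
    have h := (hdual x).mapL (U.symm : H →L[ℂ] H)
    have h2 := h.mapL (innerSL ℂ (e j))
    refine HasSum.unique ?_ h2
    convert hasSum_single j ?_ using 1
    · simp [hU, e.orthonormal.1 j]
    · intro i hi
      simp [hU, e.orthonormal.inner_eq_zero hi.symm]
  refine (hS (g j)).unique ?_
  convert hasSum_single j ?_ using 1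
  · rw [← inner_conj_symm, key]
    simp [hU, e.orthonormal.1 j]
  · intro i hi
    rw [← inner_conj_symm, key]
    simp [hU, e.orthonormal.inner_eq_zero hi.symm]

theorem isRieszBasis_of_isUnit {f h : I → H} (hf : IsRieszBasis f) {T : H →L[ℂ] H}
    (hT : IsUnit T) (hh : ∀ i, h i = T (f i)) : IsRieszBasis h := by
  obtain ⟨U, e, hU⟩ := hf
  obtain ⟨u, rfl⟩ := hT
  exact ⟨U.trans (ContinuousLinearEquiv.ofUnit u), e, fun i => by rw [hh, hU]; rfl⟩

end

/-- Let `{fᵢ}` be a Riesz basis with frame operator `S` and let `{gᵢ}` be an alternative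
dual frame of `{fᵢ}` (i.e. `{gᵢ}` is a frame and `g = ∑ᵢ ⟨g, gᵢ⟩ fᵢ` for all `g`).
If `-1 ∉ σ(S^{-a+b-1})` (real powers via the continuous functional calculus), then
`{S^a fᵢ + S^b gᵢ}` is a Riesz basis for `H`. -/
theorem stmt11 {I H : Type*} [NormedAddCommGroup H] [InnerProductSpace ℂ H] [CompleteSpace H]
    (f g : I → H) (hf : IsRieszBasis f) (S : H →L[ℂ] H) (hS : IsFrameOperator f S)
    (hg : IsFrame g) (hdual : ∀ x : H, HasSum (fun i => ⟪g i, x⟫ • f i) x)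
    (a b : ℝ) (hspec : (-1 : ℂ) ∉ spectrum ℂ (CFC.rpow S (-a + b - 1))) :
    IsRieszBasis (fun i => CFC.rpow S a (f i) + CFC.rpow S b (g i)) := by
  have hpos := frameOperator_isStrictlyPositive hS hf
  have hSu := hpos.isUnit
  have hunit (c : ℝ) : IsUnit (S ^ c) :=
    ⟨⟨S ^ c, S ^ (-c), CFC.rpow_mul_rpow_neg c, CFC.rpow_neg_mul_rpow c⟩, rfl⟩
  have hmid : IsUnit (1 + S ^ (-a + b - 1)) := by
    have h := (spectrum.notMem_iff.mp hspec).neg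
    rw [CFC.rpow_eq_pow] at h
    convert h using 1
    simp [add_comm]
  refine isRieszBasis_of_isUnit hf ((hunit a).mul hmid) fun i => ?_
  have hop : S ^ a * (1 + S ^ (-a + b - 1)) * S = S ^ a * S + S ^ b := by
    have hmul : S ^ a * S ^ (-a + b - 1) * S = S ^ b := by
      nth_rewrite 3 [← CFC.rpow_one S hpos.nonneg]
      rw [← CFC.rpow_add hSu, ← CFC.rpow_add hSu]
      congr 1
      ring
    rw [mul_add, mul_one, add_mul, hmul]
  -- Substituting `fᵢ = S gᵢ` turns the claim into the operator identity `hop` evaluated at `gᵢ`.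
  have h := DFunLike.congr_fun hop (g i)
  simpa [CFC.rpow_eq_pow, frameOperator_apply_dual hS hf hdual i] using h.symm
end
end

section
/- Let {f_i}_{i∈I} and {g_i}_{i∈I} be Bessel sequences in a separable Hilbert space H with analysis operators T₁, T₂ : H → ℓ²(I), and let L₁, L₂ : H → H be bounded operators. Then {L₁ f_i + L₂ g_i}_{i∈I} is a Riesz basis for H if and only if the bounded operator T₁ L₁* + T₂ L₂* : H → ℓ²(I) is invertible (a bijection of H onto ℓ²(I) with bounded inverse). -/
/-!
Write `h i = L₁ (f i) + L₂ (g i)`. The operator `A = T₁ L₁* + T₂ L₂*` is the analysis operator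
of `h`, so the claim is that a family is a Riesz basis iff its analysis operator is invertible.

If `h i = U (e i)` with `e` an orthonormal basis, then `A` is `U*` followed by the coordinate
isometry `H ≃ ℓ²(I)` of `e`. Conversely, if `A` is invertible, its polar decomposition `A = W P`
(`exists_polar`) has `W : H → ℓ²(I)` unitary and `P : H → H` positive and invertible. The unitary
`W` is the coordinate map of an orthonormal basis `e`, and
`⟨h i, x⟩ = (W P x) i = ⟨e i, P x⟩ = ⟨P (e i), x⟩` gives `h i = P (e i)`.
-/

noncomputable section

open ContinuousLinearMap

local notation "⟪" x ", " y "⟫" => @inner ℂ _ _ x y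

/-- A family `f : I → H` is a Bessel sequence in the complex Hilbert space `H` if there
is `B > 0` with `∑ᵢ |⟨g, fᵢ⟩|² ≤ B‖g‖²` for every `g ∈ H`. -/
def IsBessel {I H : Type*} [NormedAddCommGroup H] [InnerProductSpace ℂ H] (f : I → H) : Prop :=
  ∃ B : ℝ, 0 < B ∧ ∀ g : H,
    Summable (fun i => ‖⟪f i, g⟫‖ ^ 2) ∧ ∑' i, ‖⟪f i, g⟫‖ ^ 2 ≤ B * ‖g‖ ^ 2

/-- `T : H → ℓ²(I)` is the analysis operator of the family `f`, i.e. `(T g) i = ⟨g, fᵢ⟩`. -/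
def IsAnalysisOperator {I H : Type*} [NormedAddCommGroup H] [InnerProductSpace ℂ H]
    (f : I → H) (T : H →L[ℂ] lp (fun _ : I => ℂ) 2) : Prop :=
  ∀ (g : H) (i : I), T g i = ⟪f i, g⟫

/-- Polar decomposition of an invertible operator between Hilbert spaces, with positive part the
square root of `M* M`; only the symmetry of the positive part is recorded. -/
lemma exists_polar {H K : Type*} [NormedAddCommGroup H] [InnerProductSpace ℂ H] [CompleteSpace H]
    [NormedAddCommGroup K] [InnerProductSpace ℂ K] [CompleteSpace K] (M : H ≃L[ℂ] K) :
    ∃ (P : H ≃L[ℂ] H) (W : H ≃ₗᵢ[ℂ] K),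
      (∀ x y, ⟪P x, y⟫ = ⟪x, P y⟫) ∧ ∀ x, M x = W (P x) := by
  set Q : H →L[ℂ] H := adjoint (M : H →L[ℂ] K) ∘L (M : H →L[ℂ] K) with hQ
  have hQ0 : 0 ≤ Q := by
    rw [ContinuousLinearMap.nonneg_iff_isPositive]
    exact ContinuousLinearMap.isPositive_adjoint_comp_self _
  have hQu : IsUnit Q := by
    let N : K →L[ℂ] H := M.symm
    -- The inverse of `M* M` is `M⁻¹ (M⁻¹)*`.
    refine ⟨⟨Q, N ∘L adjoint N, ?_, ?_⟩, rfl⟩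
    · ext x
      have h1 : N ∘L (M : H →L[ℂ] K) = .id ℂ H := by ext; simp [N]
      have h2 := congrArg adjoint h1
      rw [adjoint_comp, adjoint_id] at h2
      simpa [hQ, N] using congrArg (fun F : H →L[ℂ] H => F x) h2
    · ext x
      have h1 : (M : H →L[ℂ] K) ∘L N = .id ℂ K := by ext; simp [N]
      have h2 := congrArg adjoint h1
      rw [adjoint_comp, adjoint_id] at h2
      have h3 := congrArg (fun F : K →L[ℂ] K => F (M x)) h2
      simp only [ContinuousLinearMap.coe_comp, Function.comp_apply, coe_id', id_eq] at h3
      simp [hQ, N] at h3 ⊢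
      rw [h3]; simp
  have hS0 : 0 ≤ CFC.sqrt Q := CFC.sqrt_nonneg Q
  have hSS : CFC.sqrt Q * CFC.sqrt Q = Q := CFC.sqrt_mul_sqrt_self Q hQ0
  have hSu : IsUnit (CFC.sqrt Q) := (CFC.isUnit_sqrt_iff Q hQ0).2 hQu
  obtain ⟨u, hu⟩ := hSu
  let P : H ≃L[ℂ] H := ContinuousLinearEquiv.unitsEquiv ℂ H u
  have hP : ∀ x, P x = CFC.sqrt Q x := fun x => by rw [← hu]; rfl
  have hsymm : ∀ x y, ⟪P x, y⟫ = ⟪x, P y⟫ := fun x y => by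
    rw [hP, hP]
    exact ((ContinuousLinearMap.nonneg_iff_isPositive _).1 hS0).isSymmetric x y
  have hnorm : ∀ x, ‖M x‖ = ‖P x‖ := fun x => by
    have h1 : ⟪M x, M x⟫ = ⟪P x, P x⟫ := by
      rw [← hsymm, hP, hP, ← mul_apply_eq_comp, hSS, hQ]
      simp [adjoint_inner_left]
    rw [← sq_eq_sq₀ (norm_nonneg _) (norm_nonneg _)]
    rw [inner_self_eq_norm_sq_to_K, inner_self_eq_norm_sq_to_K] at h1
    exact_mod_cast h1
  -- The unitary part is `M P⁻¹`, isometric because `‖M x‖ = ‖P x‖`.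
  refine ⟨P, ⟨(P.symm.trans M).toLinearEquiv, fun x => ?_⟩, hsymm, fun x => ?_⟩
  · simpa using hnorm (P.symm x)
  · change M x = M (P.symm (P x))
    simp

/-- If `{fᵢ}` and `{gᵢ}` are Bessel sequences with analysis operators `T₁, T₂` and
`L₁, L₂` are bounded operators on `H`, then `{L₁ fᵢ + L₂ gᵢ}` is a Riesz basis for `H`
iff `T₁ L₁* + T₂ L₂* : H → ℓ²(I)` is invertible (bijective with bounded inverse). -/
theorem stmt12 {I H : Type*} [NormedAddCommGroup H] [InnerProductSpace ℂ H] [CompleteSpace H]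
    (f g : I → H) (hf : IsBessel f) (hg : IsBessel g)
    (T₁ T₂ : H →L[ℂ] lp (fun _ : I => ℂ) 2)
    (hT₁ : IsAnalysisOperator f T₁) (hT₂ : IsAnalysisOperator g T₂)
    (L₁ L₂ : H →L[ℂ] H) :
    IsRieszBasis (fun i => L₁ (f i) + L₂ (g i)) ↔
      ∃ M : H ≃L[ℂ] lp (fun _ : I => ℂ) 2,
        (M : H →L[ℂ] lp (fun _ : I => ℂ) 2) =
          T₁ ∘L ContinuousLinearMap.adjoint L₁ + T₂ ∘L ContinuousLinearMap.adjoint L₂ := by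
  set A := T₁ ∘L ContinuousLinearMap.adjoint L₁ + T₂ ∘L ContinuousLinearMap.adjoint L₂ with hA
  have hAn : IsAnalysisOperator (fun i => L₁ (f i) + L₂ (g i)) A := fun x i => by
    have h1 := hT₁ (adjoint L₁ x) i
    have h2 := hT₂ (adjoint L₂ x) i
    rw [adjoint_inner_right] at h1 h2
    rw [inner_add_left, ← h1, ← h2]
    rfl
  constructor
  · rintro ⟨U, e, hU⟩
    have h1 : (U.symm : H →L[ℂ] H) ∘L (U : H →L[ℂ] H) = .id ℂ H := by ext; simp
    have h2 : (U : H →L[ℂ] H) ∘L (U.symm : H →L[ℂ] H) = .id ℂ H := by ext; simp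
    replace h1 := congrArg adjoint h1
    replace h2 := congrArg adjoint h2
    rw [adjoint_comp, adjoint_id] at h1 h2
    -- `V = U*`, with inverse `(U⁻¹)*`.
    let V : H ≃L[ℂ] H := ContinuousLinearEquiv.equivOfInverse
      (adjoint (U : H →L[ℂ] H)) (adjoint (U.symm : H →L[ℂ] H))
      (fun x => DFunLike.congr_fun h2 x) (fun x => DFunLike.congr_fun h1 x)
    refine ⟨V.trans e.repr.toContinuousLinearEquiv, ?_⟩
    ext x i
    rw [hAn x i, hU i]
    change e.repr (adjoint (U : H →L[ℂ] H) x) i = _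
    rw [e.repr_apply_apply, adjoint_inner_right]
    rfl
  · rintro ⟨M, hM⟩
    obtain ⟨P, W, hP, hW⟩ := exists_polar M
    refine ⟨P, HilbertBasis.ofRepr W, fun i => ext_inner_right ℂ fun x => ?_⟩
    rw [← hAn x i, ← hM, hP, ← HilbertBasis.repr_apply_apply]
    exact congrArg (fun v : lp (fun _ : I => ℂ) 2 => v i) (hW x)
end
end
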